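/- Let p be an odd prime, n a positive integer, q = p^n, and let k be a finite field with q² elements. Let G = k^× ⋊ ℤ be the semidirect product in which m ∈ ℤ acts on k^× by the m-th power of the automorphism x ↦ x^q. Then the 2-torsion subgroup of H²(G, ℂ^×) (with ℂ^× a trivial G-module) is isomorphic to ℤ/2ℤ; that is, there is exactly one nonzero class c ∈ H²(G, ℂ^×) with 2·c = 0. -/

import Mathlib

open groupCohomology

noncomputable section

/-- The 2-cocycle identity for trivial coefficients. -/
def Coc2 {G M : Type} [Group G] [AddCommGroup M] (f : G × G → M) : Prop :=
  ∀ x y z : G, f (x * y, z) + f (x, y) = f (y, z) + f (x, y * z)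

/-- The central extension attached to a 2-cocycle. -/
@[ext] structure CExt {G M : Type} [Group G] [AddCommGroup M] {f : G × G → M} (hf : Coc2 f) where
  fst : G
  snd : M

namespace CExt

variable {G M : Type} [Group G] [AddCommGroup M] {f : G × G → M}

theorem one_fst (hf : Coc2 f) (x : G) : f (1, x) = f (1, 1) := by
  have := hf 1 1 x
  simp only [one_mul] at this
  exact (add_left_cancel this).symm

theorem one_snd (hf : Coc2 f) (x : G) : f (x, 1) = f (1, 1) := by
  have := hf x 1 1
  simp only [mul_one] at this
  exact add_right_cancel this

instance (hf : Coc2 f) : Mul (CExt hf) :=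
  ⟨fun a b => ⟨a.fst * b.fst, a.snd + b.snd + f (a.fst, b.fst)⟩⟩

instance (hf : Coc2 f) : One (CExt hf) := ⟨⟨1, - f (1, 1)⟩⟩

instance (hf : Coc2 f) : Inv (CExt hf) :=
  ⟨fun a => ⟨a.fst⁻¹, - a.snd - f (a.fst⁻¹, a.fst) - f (1, 1)⟩⟩

@[simp] theorem mul_fst (hf : Coc2 f) (a b : CExt hf) : (a * b).fst = a.fst * b.fst := rfl
@[simp] theorem mul_snd (hf : Coc2 f) (a b : CExt hf) :
    (a * b).snd = a.snd + b.snd + f (a.fst, b.fst) := rfl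
@[simp] theorem fst_one (hf : Coc2 f) : (1 : CExt hf).fst = 1 := rfl
@[simp] theorem snd_one (hf : Coc2 f) : (1 : CExt hf).snd = - f (1, 1) := rfl
@[simp] theorem inv_fst (hf : Coc2 f) (a : CExt hf) : (a⁻¹).fst = a.fst⁻¹ := rfl
@[simp] theorem inv_snd (hf : Coc2 f) (a : CExt hf) :
    (a⁻¹).snd = - a.snd - f (a.fst⁻¹, a.fst) - f (1, 1) := rfl

instance (hf : Coc2 f) : Group (CExt hf) :=
  Group.ofLeftAxioms
    (by
      intro a b c
      ext
      · simp [mul_assoc]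
      · simp only [mul_snd, mul_fst]
        have := hf a.fst b.fst c.fst
        calc _ = a.snd + b.snd + c.snd + (f (a.fst * b.fst, c.fst) + f (a.fst, b.fst)) := by abel
          _ = _ := by rw [this]; abel)
    (by
      intro a
      ext
      · simp
      · simp [one_fst hf])
    (by
      intro a
      ext
      · simp
      · simp; abel)

/-- Projection. -/
def proj (hf : Coc2 f) : CExt hf →* G where
  toFun a := a.fst
  map_one' := rfl
  map_mul' _ _ := rfl

end CExt

/-- second component of the `i`-th power of the standard lift -/
def pw {G M : Type} [Group G] [AddCommGroup M] (f : G × G → M) (g : G) (i : ℕ) : M :=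
  - f (1, 1) + ∑ j ∈ Finset.range i, f (g ^ j, g)

theorem CExt.pow_eq {G M : Type} [Group G] [AddCommGroup M] {f : G × G → M} (hf : Coc2 f)
    (g : G) (z : M) (i : ℕ) :
    (⟨g, z⟩ : CExt hf) ^ i = ⟨g ^ i, pw f g i + i • z⟩ := by
  induction i with
  | zero => ext <;> simp [pw]
  | succ i ih =>
    rw [pow_succ, ih]
    ext
    · simp [pow_succ]
    · simp [pw, Finset.sum_range_succ, succ_nsmul]; abel

/-- the invariant -/
def inva {G M : Type} [Group G] [AddCommGroup M] (g t : G) (q N : ℕ) (f : G × G → M) : M :=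
  (q + 1) • (f (t, g) - f (g ^ q, t) - pw f g q) + (pw f g N + f (1, 1))

theorem inva_sub {G M : Type} [Group G] [AddCommGroup M] (g t : G) (q N : ℕ) (f f' : G × G → M) :
    inva g t q N (f - f') = inva g t q N f - inva g t q N f' := by
  simp only [inva, pw, Pi.sub_apply, Finset.sum_sub_distrib, nsmul_add, nsmul_sub, neg_sub]
  simp only [smul_sub, smul_add, smul_neg]
  abel

theorem inva_nsmul {G M : Type} [Group G] [AddCommGroup M] (g t : G) (q N m : ℕ) (f : G × G → M) :
    inva g t q N (m • f) = m • inva g t q N f := by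
  simp only [inva, pw, Pi.smul_apply, ← Finset.smul_sum, smul_sub, smul_add, smul_neg,
    smul_comm _ m]

theorem inva_cob {G M : Type} [Group G] [AddCommGroup M] (g t : G) (q N : ℕ) (f : G × G → M)
    (hN : g ^ N = 1) (hNq : N + 1 = q ^ 2) (ht : t * g = g ^ q * t)
    (h : G → M) (hh : ∀ x y, f (x, y) = h y - h (x * y) + h x) : inva g t q N f = 0 := by
  have hp : ∀ i, pw f g i = i • h g - h (g ^ i) := by
    intro i
    induction i with
    | zero => simp [pw, hh]
    | succ i ih =>
      rw [pw, Finset.sum_range_succ, ← add_assoc, ← pw, ih, hh, succ_nsmul, pow_succ]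
      abel
  have hN' : N • h g = (q ^ 2) • h g - h g := by rw [← hNq, succ_nsmul]; abel
  rw [inva, hp, hp, hN, hh, hh, hh, ht, hN', pow_two, mul_nsmul, add_nsmul]
  simp only [smul_sub, smul_add, mul_one]
  abel

theorem exists_cob {A : Type} [CommGroup A] {M : Type} [AddCommGroup M]
    (hdiv : ∀ (m : ℕ) (x : M), m ≠ 0 → ∃ y, m • y = x)
    (σ : MulAut A) (q N : ℕ) (hq : 1 < q) (hNq : N + 1 = q ^ 2) (hσ : ∀ x, σ x = x ^ q)
    (g : A) (hg : ∀ x, x ∈ Subgroup.zpowers g) (hgN : orderOf g = N)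
    (f : (A ⋊[zpowersHom (MulAut A) σ] Multiplicative ℤ) ×
      (A ⋊[zpowersHom (MulAut A) σ] Multiplicative ℤ) → M)
    (hf : Coc2 f)
    (h0 : inva (SemidirectProduct.inl g) (SemidirectProduct.inr (Multiplicative.ofAdd 1)) q N f = 0) :
    ∃ h : (A ⋊[zpowersHom (MulAut A) σ] Multiplicative ℤ) → M,
      ∀ x y, f (x, y) = h y - h (x * y) + h x := by
  set g' : (A ⋊[zpowersHom (MulAut A) σ] Multiplicative ℤ) := SemidirectProduct.inl g with hg'
  set t : (A ⋊[zpowersHom (MulAut A) σ] Multiplicative ℤ) :=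
    SemidirectProduct.inr (Multiplicative.ofAdd 1) with ht
  have htg : t * g' = g' ^ q * t := by
    rw [hg', ht, ← map_pow]
    apply SemidirectProduct.ext
    · simp [hσ, -map_pow]
    · simp [-map_pow]
  have hgN1 : g' ^ N = 1 := by rw [hg', ← map_pow, ← hgN, pow_orderOf_eq_one, map_one]
  obtain ⟨z, hz⟩ := hdiv (q - 1) (f (t, g') - f (g' ^ q, t) - pw f g' q) (by omega)
  have hNz : N • z = (q + 1) • (f (t, g') - f (g' ^ q, t) - pw f g' q) := by
    rw [← hz, ← mul_nsmul]
    congr 1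
    obtain ⟨r, rfl⟩ : ∃ r, q = r + 1 := ⟨q - 1, by omega⟩
    simp only [Nat.add_sub_cancel]
    have : N + 1 = r * (r + 1 + 1) + 1 := by rw [hNq]; ring
    omega
  have hqz : q • z = (f (t, g') - f (g' ^ q, t) - pw f g' q) + z := by
    rw [← hz]
    conv_lhs => rw [show q = (q - 1) + 1 by omega, succ_nsmul]
  let G1 : CExt hf := ⟨g', z⟩
  let T1 : CExt hf := ⟨t, 0⟩
  have hG1N : G1 ^ N = 1 := by
    rw [CExt.pow_eq]
    ext1
    · exact hgN1
    · rw [inva, ← hNz] at h0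
      simp only [CExt.snd_one]
      rw [eq_neg_iff_add_eq_zero, ← h0]; abel
  have hTG : T1 * G1 = G1 ^ q * T1 := by
    rw [CExt.pow_eq]
    ext1
    · exact htg
    · simp only [CExt.mul_snd, hqz, G1, T1]
      abel
  let SA : A →* CExt hf := monoidHomOfForallMemZpowers hg (g' := G1)
    (by rw [hgN]; exact orderOf_dvd_of_pow_eq_one hG1N)
  have hSA : SA g = G1 := monoidHomOfForallMemZpowers_apply_gen hg _
  have hext : ∀ {H : Type} [Group H] (u v : A →* H), u g = v g → u = v := by
    intro H _ u v huv
    ext x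
    obtain ⟨i, rfl⟩ := Subgroup.mem_zpowers_iff.1 (hg x)
    rw [map_zpow, map_zpow, huv]
  have hcomm1 : ∀ a, SA (σ a) = T1 * SA a * T1⁻¹ := by
    have := hext (SA.comp σ.toMonoidHom) ((MulAut.conj T1).toMonoidHom.comp SA) (by
      simp [hSA, hσ, hTG])
    intro a
    simpa using DFunLike.congr_fun this a
  have hcomm : ∀ (i : ℤ) a, SA ((σ ^ i) a) = T1 ^ i * SA a * (T1 ^ i)⁻¹ := by
    intro i
    induction i using Int.induction_on with
    | zero => intro a; simp
    | succ i ih =>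
      intro a
      rw [zpow_add_one, zpow_add_one, MulAut.mul_apply, ih, hcomm1]; group
    | pred i ih =>
      intro a
      have := hcomm1 (σ⁻¹ a)
      rw [MulAut.apply_inv_self] at this
      rw [zpow_sub_one, zpow_sub_one, MulAut.mul_apply, ih, this]; group
  let S : (A ⋊[zpowersHom (MulAut A) σ] Multiplicative ℤ) →* CExt hf :=
    SemidirectProduct.lift SA (zpowersHom _ T1) (by
      intro i
      ext1 a
      exact hcomm (Multiplicative.toAdd i) a)
  have hS : (CExt.proj hf).comp S = MonoidHom.id _ := by
    apply SemidirectProduct.hom_ext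
    · apply hext
      simp only [MonoidHom.comp_apply, S, SemidirectProduct.lift_inl, hSA]
      rfl
    · apply MonoidHom.ext_mint
      simp [S]
      rfl
  have hS' : ∀ x, (S x).fst = x := fun x => DFunLike.congr_fun hS x
  refine ⟨fun x => - (S x).snd, fun x y => ?_⟩
  have := congrArg CExt.snd (map_mul S x y)
  rw [CExt.mul_snd, hS', hS'] at this
  dsimp only
  rw [this]
  abel

/-- affine permutation of the character group -/
def affT {A B : Type} [CommGroup A] [CommGroup B] (σ : MulAut A) (χ : A →* B) :
    Equiv.Perm (A →* B) where
  toFun x := (x.comp σ.toMonoidHom) * χ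
  invFun x := (x * χ⁻¹).comp (σ⁻¹).toMonoidHom
  left_inv x := by ext a; simp
  right_inv x := by ext a; simp

theorem affT_zpow {A B : Type} [CommGroup A] [CommGroup B] (σ : MulAut A) (χ : A →* B) (i : ℤ) :
    ∀ (x : A →* B) (a : A), (affT σ χ ^ i) x a = x ((σ ^ i) a) * (affT σ χ ^ i) 1 a := by
  have h1 : ∀ (x : A →* B) (a : A), affT σ χ x a = x (σ a) * χ a := fun x a => rfl
  have h2 : ∀ (x : A →* B) (a : A), (affT σ χ)⁻¹ x a = x (σ⁻¹ a) * (χ (σ⁻¹ a))⁻¹ := fun x a => rfl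
  induction i using Int.induction_on with
  | zero => intro x a; simp
  | succ i ih =>
    intro x a
    rw [zpow_add_one, zpow_add_one, Equiv.Perm.mul_apply, Equiv.Perm.mul_apply, ih, h1,
      ih (affT σ χ 1), h1, MulAut.mul_apply]
    have hc : σ ((σ ^ (i : ℤ)) a) = (σ ^ (i : ℤ)) (σ a) := by
      rw [← MulAut.mul_apply, ← MulAut.mul_apply, (Commute.self_zpow σ (i : ℤ)).eq]
    simp only [MonoidHom.one_apply, one_mul, mul_assoc, hc]
  | pred i ih =>
    intro x a
    rw [zpow_sub_one, zpow_sub_one, Equiv.Perm.mul_apply, Equiv.Perm.mul_apply, ih, h2,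
      ih ((affT σ χ)⁻¹ 1), h2, MulAut.mul_apply]
    have hc : σ⁻¹ ((σ ^ (-(i : ℤ))) a) = (σ ^ (-(i : ℤ))) (σ⁻¹ a) := by
      rw [← MulAut.mul_apply, ← MulAut.mul_apply,
        ((Commute.refl σ).inv_left.zpow_right (-(i : ℤ))).eq]
    simp only [MonoidHom.one_apply, one_mul, mul_assoc, hc]

/-- The explicit cocycle -/
def cocF {A B : Type} [CommGroup A] [CommGroup B] (σ : MulAut A) (χ : A →* B) :
    (A ⋊[zpowersHom (MulAut A) σ] Multiplicative ℤ) ×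
      (A ⋊[zpowersHom (MulAut A) σ] Multiplicative ℤ) → Additive B :=
  fun x => Additive.ofMul ((affT σ χ ^ (Multiplicative.toAdd x.1.right)) 1 x.2.left)

theorem cocF_coc {A B : Type} [CommGroup A] [CommGroup B] (σ : MulAut A) (χ : A →* B) :
    Coc2 (cocF σ χ) := by
  intro x y z
  apply Additive.toMul.injective
  simp only [cocF, toMul_add, toMul_ofMul, SemidirectProduct.mul_left, SemidirectProduct.mul_right,
    toAdd_mul, map_mul, zpowersHom_apply]
  rw [add_comm (Multiplicative.toAdd x.right), zpow_add, Equiv.Perm.mul_apply, affT_zpow]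
  simp only [mul_comm, mul_left_comm, mul_assoc]

theorem cocF_inva {A B : Type} [CommGroup A] [CommGroup B] (σ : MulAut A) (χ : A →* B) (g : A)
    (q N : ℕ) :
    inva (SemidirectProduct.inl g) (SemidirectProduct.inr (Multiplicative.ofAdd 1)) q N (cocF σ χ)
      = Additive.ofMul (χ g ^ (q + 1)) := by
  have h1 : affT σ χ 1 g = χ g := by
    change (1 : A →* B) (σ g) * χ g = _
    simp
  rw [ofMul_pow]
  simp [inva, pw, cocF, ← map_pow SemidirectProduct.inl, h1, -map_pow]

theorem h2_semidirect_cunits_two_torsion (p n : ℕ) (hp : p.Prime) (hodd : Odd p) (hn : 0 < n)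
    (k : Type) [Field k] [Fintype k] (hk : Fintype.card k = (p ^ n) ^ 2)
    (σ : MulAut kˣ) (hσ : ∀ x : kˣ, σ x = x ^ (p ^ n)) :
    ∃! c : H2 (Rep.trivial ℤ (kˣ ⋊[zpowersHom (MulAut kˣ) σ] Multiplicative ℤ)
        (Additive ℂˣ)), c ≠ 0 ∧ 2 • c = 0 := by
  set q := p ^ n with hq
  have hq1 : 1 < q := Nat.one_lt_pow hn.ne' hp.one_lt
  have hqodd : Odd q := hodd.pow
  obtain ⟨g, hg⟩ := IsCyclic.exists_generator (α := kˣ)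
  have hroot : ∀ (m : ℕ) (x : ℂˣ), m ≠ 0 → ∃ y : ℂˣ, y ^ m = x := by
    intro m x hm
    obtain ⟨y, hy⟩ := IsAlgClosed.exists_pow_nat_eq (x : ℂ) (Nat.pos_of_ne_zero hm)
    have hy0 : y ≠ 0 := by
      rintro rfl
      rw [zero_pow hm] at hy
      exact x.ne_zero hy.symm
    exact ⟨Units.mk0 y hy0, by ext; simpa using hy⟩
  have hdiv : ∀ (m : ℕ) (x : Additive ℂˣ), m ≠ 0 → ∃ y, m • y = x := by
    intro m x hm
    obtain ⟨y, hy⟩ := hroot m x.toMul hm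
    exact ⟨Additive.ofMul y, by rw [← ofMul_pow, hy]; rfl⟩
  set N := orderOf g with hN
  have hNq : N + 1 = q ^ 2 := by
    classical
    rw [hN, orderOf_eq_card_of_forall_mem_zpowers hg, Nat.card_eq_fintype_card, Fintype.card_units, hk]
    have : 0 < q ^ 2 := by positivity
    omega
  set R := Rep.trivial ℤ (kˣ ⋊[zpowersHom (MulAut kˣ) σ] Multiplicative ℤ) (Additive ℂˣ) with hR
  set g' : (kˣ ⋊[zpowersHom (MulAut kˣ) σ] Multiplicative ℤ) := SemidirectProduct.inl g with hg'
  set t : (kˣ ⋊[zpowersHom (MulAut kˣ) σ] Multiplicative ℤ) :=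
    SemidirectProduct.inr (Multiplicative.ofAdd 1) with ht
  have htg : t * g' = g' ^ q * t := by
    rw [hg', ht, ← map_pow]
    apply SemidirectProduct.ext
    · simp [hσ, -map_pow]
    · simp [-map_pow]
  have hgN1 : g' ^ N = 1 := by rw [hg', ← map_pow, pow_orderOf_eq_one, map_one]
  -- membership criteria
  have hcoc : ∀ f : (kˣ ⋊[zpowersHom (MulAut kˣ) σ] Multiplicative ℤ) ×
      (kˣ ⋊[zpowersHom (MulAut kˣ) σ] Multiplicative ℤ) → Additive ℂˣ,
      f ∈ cocycles₂ R ↔ Coc2 f := fun f => mem_cocycles₂_iff (A := R) f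
  have key : ∀ f : cocycles₂ R, H2π R f = 0 ↔ inva (M := Additive ℂˣ) g' t q N f.1 = 0 := by
    intro f
    rw [H2π_eq_zero_iff]
    constructor
    · rintro ⟨h, hh⟩
      refine inva_cob g' t q N f.1 hgN1 hNq htg h fun x y => ?_
      exact (congrFun hh (x, y)).symm
    · intro h0
      obtain ⟨h, hh⟩ := exists_cob hdiv σ q N hq1 hNq hσ g hg rfl f.1 ((hcoc _).1 f.2) h0
      refine ⟨h, funext fun x => ?_⟩
      exact (hh x.1 x.2).symm
  have two : ∀ f : cocycles₂ R, (H2π R f ≠ 0 ∧ 2 • H2π R f = 0) ↔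
      inva (M := Additive ℂˣ) g' t q N f.1 = Additive.ofMul (-1) := by
    intro f
    have h2 : 2 • H2π R f = H2π R (2 • f) := (map_nsmul (H2π R).hom 2 f).symm
    rw [h2, ne_eq, key, key]
    have h3 : inva (M := Additive ℂˣ) g' t q N (2 • f).1 =
      2 • inva (M := Additive ℂˣ) g' t q N f.1 := inva_nsmul g' t q N 2 f.1
    rw [h3]
    generalize inva (M := Additive ℂˣ) g' t q N f.1 = u
    obtain ⟨u, rfl⟩ := Additive.ofMul.surjective u
    rw [← ofMul_pow, ofMul_eq_zero, ofMul_eq_zero, Additive.ofMul.injective.eq_iff,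
      Units.ext_iff, Units.ext_iff, Units.ext_iff]
    simp only [Units.val_pow_eq_pow_val, Units.val_one, Units.val_neg]
    rw [sq_eq_one_iff]
    constructor
    · rintro ⟨h, h' | h'⟩
      · exact absurd h' h
      · exact h'
    · intro h
      rw [h]
      norm_num
  obtain ⟨w, hw⟩ := hroot (q + 1) (-1) (by omega)
  have hwN : w ^ N = 1 := by
    obtain ⟨r, hr⟩ := hqodd
    have : N = (q + 1) * (2 * r) := by
      have : N + 1 = (q + 1) * (2 * r) + 1 := by rw [hNq, hr]; ring
      omega
    rw [this, pow_mul, hw, pow_mul]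
    simp
  let χ : kˣ →* ℂˣ := monoidHomOfForallMemZpowers hg (g' := w) (orderOf_dvd_of_pow_eq_one hwN)
  have hχ : χ g = w := monoidHomOfForallMemZpowers_apply_gen hg _
  let f0 : cocycles₂ R := ⟨cocF (B := ℂˣ) σ χ, (hcoc _).2 (cocF_coc σ χ)⟩
  have hf0 : inva (M := Additive ℂˣ) g' t q N f0.1 = Additive.ofMul (-1) := by
    rw [← hw, ← hχ]
    exact cocF_inva σ χ g q N
  refine ⟨H2π R f0, (two f0).2 hf0, ?_⟩
  intro c hc
  induction c using H2_induction_on with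
  | h f =>
    have hf := (two f).1 hc
    rw [← sub_eq_zero, ← map_sub, key]
    have : inva (M := Additive ℂˣ) g' t q N (f - f0).1 = _ := inva_sub g' t q N f.1 f0.1
    rw [this, hf, hf0, sub_self]
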